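/- arXiv:1904.00670 — 3 statements merged into one kernel-verified Lean document; each statement's English description precedes it below -/
import Mathlib

section
/- Let d ≥ 1, n ≥ 1, let θ*_1, ..., θ*_n ∈ ℝ^d, and let M_1, ..., M_n be symmetric positive definite real d×d matrices. Let p : ℝ^d → ℝ be continuous and nonnegative with p(θ*_i) > 0 for every i, and let h : ℝ^d → ℝ be continuous. Then the limit as ε → 0⁺ of the ratio (∑_{i=1}^n ∫_{C_ε(θ*_i, M_i)} h(θ) p(θ) dθ) / (∑_{i=1}^n ∫_{C_ε(θ*_i, M_i)} p(θ) dθ) exists and equals (∑_{i=1}^n (det M_i)^{-1/2} p(θ*_i) h(θ*_i)) / (∑_{i=1}^n (det M_i)^{-1/2} p(θ*_i)). -/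
open MeasureTheory Filter Matrix

/-- The acceptance ellipsoid `C_ε(θ*, M) = {θ : (θ - θ*)ᵀ M (θ - θ*) ≤ ε}`. -/
def acceptanceEllipsoid (d : ℕ) (M : Matrix (Fin d) (Fin d) ℝ) (c : Fin d → ℝ) (ε : ℝ) :
    Set (Fin d → ℝ) :=
  {θ | (θ - c) ⬝ᵥ M.mulVec (θ - c) ≤ ε}

/-!
Write `M = Bᵀ B` with `B` invertible. Then `C_ε(θ*, M)` is the preimage under `B` of the Euclidean
ball `C_ε(B θ*, 1)`, so its volume is `(det M)^{-1/2}` times that of the ball `C_ε(0, 1)`, and it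
shrinks to `θ*` as `ε → 0⁺`. The average of a function over `C_ε(θ*, M)` thus tends to its value
at `θ*`, and the volume of `C_ε(0, 1)` is a common factor of all the integrals, which cancels in
the ratio.
-/

open scoped Topology

section General

open scoped ComplexOrder MatrixOrder Matrix.Norms.L2Operator in
theorem exists_isUnit_eq_conjTranspose_mul_self {n 𝕜 : Type*} [Fintype n] [DecidableEq n]
    [RCLike 𝕜] {M : Matrix n n 𝕜} (hM : M.PosDef) :
    ∃ B : Matrix n n 𝕜, IsUnit B ∧ M = Bᴴ * B :=
  CStarAlgebra.isStrictlyPositive_iff_eq_star_mul_self.mp hM.isStrictlyPositive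

theorem abs_le_sqrt_dotProduct_self {n : Type*} [Fintype n] (v : n → ℝ) (i : n) :
    |v i| ≤ √(v ⬝ᵥ v) := by
  refine Real.abs_le_sqrt ?_
  rw [sq]
  exact Finset.single_le_sum (f := fun j => v j * v j) (fun j _ => mul_self_nonneg (v j))
    (Finset.mem_univ i)

variable {X : Type*} [MeasurableSpace X] {μ : Measure X}

theorem stronglyMeasurableAtFilter_smul {𝕜 β : Type*} [TopologicalSpace 𝕜] [TopologicalSpace β]
    [SMul 𝕜 β] [ContinuousSMul 𝕜 β] {l : Filter X} {f : X → 𝕜} {g : X → β}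
    (hf : StronglyMeasurableAtFilter f l μ) (hg : StronglyMeasurableAtFilter g l μ) :
    StronglyMeasurableAtFilter (fun x => f x • g x) l μ := by
  obtain ⟨s, hs, hfs⟩ := hf
  obtain ⟨t, ht, hgt⟩ := hg
  exact ⟨s ∩ t, inter_mem hs ht,
    (hfs.mono_set Set.inter_subset_left).smul (hgt.mono_set Set.inter_subset_right)⟩

theorem tendsto_setAverage_of_continuousAt {ι E : Type*} [NormedAddCommGroup E]
    [NormedSpace ℝ E] [CompleteSpace E] [TopologicalSpace X] [OpensMeasurableSpace X]
    [IsLocallyFiniteMeasure μ] {x : X} {f : X → E}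
    (hf : ContinuousAt f x) (hfm : StronglyMeasurableAtFilter f (𝓝 x) μ)
    {s : ι → Set X} {l : Filter ι} (hs : Tendsto s l (𝓝 x).smallSets)
    (hμs : ∀ᶠ i in l, μ.real (s i) ≠ 0) :
    Tendsto (fun i => ⨍ y in s i, f y ∂μ) l (𝓝 (f x)) := by
  have hsub := (hf.integral_sub_linear_isLittleO_ae hfm hs).tendsto_inv_smul_nhds_zero
  rw [← tendsto_sub_nhds_zero_iff]
  refine hsub.congr' ?_
  filter_upwards [hμs] with i hi
  rw [setAverage_eq, smul_sub, inv_smul_smul₀ hi]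

end General

section AcceptanceEllipsoid

variable {d : ℕ} {M : Matrix (Fin d) (Fin d) ℝ}

theorem acceptanceEllipsoid_transpose_mul_mul (B N : Matrix (Fin d) (Fin d) ℝ) (c : Fin d → ℝ)
    (ε : ℝ) :
    acceptanceEllipsoid d (Bᵀ * N * B) c ε =
      B.toLin' ⁻¹' acceptanceEllipsoid d N (B *ᵥ c) ε := by
  ext θ
  simp only [acceptanceEllipsoid, Set.mem_preimage, Set.mem_ofPred_eq, toLin'_apply, ← mulVec_sub,
    ← mulVec_mulVec, dotProduct_mulVec _ Bᵀ, vecMul_transpose]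

theorem exists_isUnit_acceptanceEllipsoid_eq_preimage (hM : M.PosDef) :
    ∃ B : Matrix (Fin d) (Fin d) ℝ, IsUnit B ∧ √M.det = |B.det| ∧
      ∀ c ε, acceptanceEllipsoid d M c ε =
        B.toLin' ⁻¹' acceptanceEllipsoid d 1 (B *ᵥ c) ε := by
  obtain ⟨B, hB, rfl⟩ := exists_isUnit_eq_conjTranspose_mul_self hM
  rw [conjTranspose_eq_transpose_of_trivial]
  refine ⟨B, hB, ?_, fun c ε => ?_⟩
  · rw [det_mul, det_transpose, Real.sqrt_mul_self_eq_abs]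
  · rw [← acceptanceEllipsoid_transpose_mul_mul, mul_one]

theorem volume_acceptanceEllipsoid_eq_center_zero (M : Matrix (Fin d) (Fin d) ℝ) (c : Fin d → ℝ)
    (ε : ℝ) :
    volume (acceptanceEllipsoid d M c ε) = volume (acceptanceEllipsoid d M 0 ε) := by
  have htranslate : acceptanceEllipsoid d M c ε =
      (fun θ => θ + -c) ⁻¹' acceptanceEllipsoid d M 0 ε := by
    simp only [acceptanceEllipsoid, Set.preimage_ofPred_eq, sub_zero, ← sub_eq_add_neg]
  rw [htranslate, measure_preimage_add_right]

theorem volume_real_acceptanceEllipsoid (hM : M.PosDef) (c : Fin d → ℝ) (ε : ℝ) :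
    volume.real (acceptanceEllipsoid d M c ε) =
      (√M.det)⁻¹ * volume.real (acceptanceEllipsoid d 1 0 ε) := by
  obtain ⟨B, hB, hdet, hpreimage⟩ := exists_isUnit_acceptanceEllipsoid_eq_preimage hM
  have hBdet : LinearMap.det B.toLin' ≠ 0 := by
    rw [LinearMap.det_toLin']
    exact ((isUnit_iff_isUnit_det B).1 hB).ne_zero
  rw [measureReal_def, hpreimage, Measure.addHaar_preimage_linearMap _ hBdet,
    volume_acceptanceEllipsoid_eq_center_zero, LinearMap.det_toLin', ENNReal.toReal_mul,
    ENNReal.toReal_ofReal (abs_nonneg _), abs_inv, ← hdet, ← measureReal_def]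

theorem acceptanceEllipsoid_one_subset_closedBall (c : Fin d → ℝ) (ε : ℝ) :
    acceptanceEllipsoid d 1 c ε ⊆ Metric.closedBall c √ε := by
  intro θ hθ
  simp only [acceptanceEllipsoid, one_mulVec, Set.mem_ofPred_eq] at hθ
  rw [mem_closedBall_iff_norm, pi_norm_le_iff_of_nonneg ε.sqrt_nonneg]
  exact fun i => (abs_le_sqrt_dotProduct_self (θ - c) i).trans (Real.sqrt_le_sqrt hθ)

theorem acceptanceEllipsoid_mem_nhds (M : Matrix (Fin d) (Fin d) ℝ) (c : Fin d → ℝ) {ε : ℝ}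
    (hε : 0 < ε) : acceptanceEllipsoid d M c ε ∈ 𝓝 c := by
  have hcont : Continuous fun θ : Fin d → ℝ => (θ - c) ⬝ᵥ M *ᵥ (θ - c) := by fun_prop
  exact hcont.continuousAt.eventually_le_const (by simpa using hε)

theorem volume_real_acceptanceEllipsoid_one_pos (c : Fin d → ℝ) {ε : ℝ} (hε : 0 < ε) :
    0 < volume.real (acceptanceEllipsoid d 1 c ε) :=
  ENNReal.toReal_pos
    (Measure.measure_pos_of_mem_nhds volume (acceptanceEllipsoid_mem_nhds 1 c hε)).ne'
    (measure_ne_top_of_subset (acceptanceEllipsoid_one_subset_closedBall c ε)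
      measure_closedBall_lt_top.ne)

theorem tendsto_acceptanceEllipsoid_one_smallSets (c : Fin d → ℝ) :
    Tendsto (acceptanceEllipsoid d 1 c) (𝓝[>] 0) (𝓝 c).smallSets := by
  have hsqrt : Tendsto Real.sqrt (𝓝[>] 0) (𝓝 0) := by
    simpa using Real.continuous_sqrt.continuousWithinAt.tendsto (x := (0 : ℝ))
  exact ((tendsto_closedBall_smallSets c).comp hsqrt).smallSets_mono
    (.of_forall (acceptanceEllipsoid_one_subset_closedBall c))

theorem tendsto_acceptanceEllipsoid_smallSets (hM : M.PosDef) (c : Fin d → ℝ) :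
    Tendsto (acceptanceEllipsoid d M c) (𝓝[>] 0) (𝓝 c).smallSets := by
  obtain ⟨B, hB, -, hpreimage⟩ := exists_isUnit_acceptanceEllipsoid_eq_preimage hM
  have hembed : Topology.IsClosedEmbedding B.toLin' :=
    LinearMap.isClosedEmbedding_of_injective
      (LinearMap.ker_eq_bot.2 (mulVec_injective_iff_isUnit.2 hB))
  rw [hembed.isInducing.nhds_eq_comap, smallSets_comap_eq_comap_image, tendsto_comap_iff]
  refine (tendsto_acceptanceEllipsoid_one_smallSets (B *ᵥ c)).smallSets_mono
    (.of_forall fun ε => ?_)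
  rw [Function.comp_apply, hpreimage]
  exact Set.image_preimage_subset _ _

variable {E : Type*} [NormedAddCommGroup E] [NormedSpace ℝ E] [CompleteSpace E]

theorem tendsto_inv_volume_smul_setIntegral_acceptanceEllipsoid (hM : M.PosDef) {c : Fin d → ℝ}
    {f : (Fin d → ℝ) → E} (hf : ContinuousAt f c) (hfm : StronglyMeasurableAtFilter f (𝓝 c)) :
    Tendsto
      (fun ε => (volume.real (acceptanceEllipsoid d 1 0 ε))⁻¹ •
        ∫ θ in acceptanceEllipsoid d M c ε, f θ)
      (𝓝[>] 0) (𝓝 ((√M.det)⁻¹ • f c)) := by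
  have hw : (√M.det)⁻¹ ≠ 0 := (inv_pos.2 (Real.sqrt_pos.2 hM.det_pos)).ne'
  have hvol : ∀ᶠ ε in 𝓝[>] 0, volume.real (acceptanceEllipsoid d M c ε) ≠ 0 := by
    filter_upwards [self_mem_nhdsWithin] with ε hε
    rw [volume_real_acceptanceEllipsoid hM]
    exact mul_ne_zero hw (volume_real_acceptanceEllipsoid_one_pos 0 hε).ne'
  have haverage := tendsto_setAverage_of_continuousAt hf hfm
    (tendsto_acceptanceEllipsoid_smallSets hM c) hvol
  refine (haverage.const_smul (√M.det)⁻¹).congr fun ε => ?_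
  rw [setAverage_eq, volume_real_acceptanceEllipsoid hM, mul_inv, mul_smul, smul_inv_smul₀ hw]

theorem romc_limit_eq_omc_general {ι : Type*} [Fintype ι] {θs : ι → Fin d → ℝ}
    {M : ι → Matrix (Fin d) (Fin d) ℝ} (hM : ∀ i, (M i).PosDef)
    {p : (Fin d → ℝ) → ℝ} (hp : ∀ i, ContinuousAt p (θs i))
    (hpm : ∀ i, StronglyMeasurableAtFilter p (𝓝 (θs i)))
    {h : (Fin d → ℝ) → E} (hh : ∀ i, ContinuousAt h (θs i))
    (hhm : ∀ i, StronglyMeasurableAtFilter h (𝓝 (θs i)))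
    (hweight : ∑ i, (√(M i).det)⁻¹ * p (θs i) ≠ 0) :
    Tendsto
      (fun ε =>
        (∑ i, ∫ θ in acceptanceEllipsoid d (M i) (θs i) ε, p θ)⁻¹ •
          ∑ i, ∫ θ in acceptanceEllipsoid d (M i) (θs i) ε, p θ • h θ)
      (𝓝[>] 0)
      (𝓝 ((∑ i, (√(M i).det)⁻¹ * p (θs i))⁻¹ •
        ∑ i, ((√(M i).det)⁻¹ * p (θs i)) • h (θs i))) := by
  have hdenominator := tendsto_finsetSum Finset.univ fun i _ =>
    tendsto_inv_volume_smul_setIntegral_acceptanceEllipsoid (hM i) (hp i) (hpm i)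
  have hnumerator := tendsto_finsetSum Finset.univ fun i _ =>
    tendsto_inv_volume_smul_setIntegral_acceptanceEllipsoid (hM i) ((hp i).smul (hh i))
      (stronglyMeasurableAtFilter_smul (hpm i) (hhm i))
  simp only [smul_eq_mul, ← Finset.mul_sum, ← Finset.smul_sum, Pi.smul_apply', smul_smul]
    at hdenominator hnumerator
  refine ((hdenominator.inv₀ hweight).smul hnumerator).congr' ?_
  filter_upwards [self_mem_nhdsWithin] with ε hε
  have hball := (volume_real_acceptanceEllipsoid_one_pos (d := d) 0 hε).ne'
  rw [_root_.mul_inv_rev, inv_inv, mul_smul, smul_inv_smul₀ hball]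

end AcceptanceEllipsoid

/-- Theorem 1 of the paper (limiting statement): as ε → 0⁺, the ROMC posterior expectation
reduces to the OMC weighted average with weights `(det M_i)^{-1/2} p(θ*_i)`. -/
theorem romc_limit_eq_omc (d n : ℕ) (hd : 1 ≤ d) (hn : 1 ≤ n)
    (θs : Fin n → (Fin d → ℝ)) (M : Fin n → Matrix (Fin d) (Fin d) ℝ)
    (hM : ∀ i, (M i).PosDef)
    (p : (Fin d → ℝ) → ℝ) (hp : Continuous p) (hp0 : ∀ θ, 0 ≤ p θ)
    (hpθ : ∀ i, 0 < p (θs i))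
    (h : (Fin d → ℝ) → ℝ) (hh : Continuous h) :
    Tendsto
      (fun ε : ℝ =>
        (∑ i, ∫ θ in acceptanceEllipsoid d (M i) (θs i) ε, h θ * p θ) /
        (∑ i, ∫ θ in acceptanceEllipsoid d (M i) (θs i) ε, p θ))
      (nhdsWithin 0 (Set.Ioi 0))
      (nhds
        ((∑ i, (Real.sqrt (M i).det)⁻¹ * p (θs i) * h (θs i)) /
         (∑ i, (Real.sqrt (M i).det)⁻¹ * p (θs i)))) := by
  have hweight : 0 < ∑ i, (√(M i).det)⁻¹ * p (θs i) :=
    Finset.sum_pos (fun i _ => mul_pos (inv_pos.2 (Real.sqrt_pos.2 (hM i).det_pos)) (hpθ i))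
      ⟨⟨0, hn⟩, Finset.mem_univ _⟩
  simpa only [div_eq_inv_mul, mul_comm (h _), smul_eq_mul] using
    romc_limit_eq_omc_general hM (fun _ => hp.continuousAt)
      (fun _ => hp.stronglyMeasurableAtFilter _ _) (fun _ => hh.continuousAt)
      (fun _ => hh.stronglyMeasurableAtFilter _ _) hweight.ne'
end

section
/- Let n ≥ 1 and for each i = 1, ..., n let C_i ⊆ ℝ^d be measurable, let q_i be a nonnegative measurable density on ℝ^d with q_i(θ) > 0 for all θ ∈ C_i, and let (θ_{ij})_{j≥1} be i.i.d. ℝ^d-valued random variables with law having density q_i, with all the sequences (θ_{ij})_{i,j} jointly independent. Let p : ℝ^d → ℝ be a nonnegative measurable (prior) density and h : ℝ^d → ℝ measurable, define the weights w_{ij} = 1_{C_i}(θ_{ij}) p(θ_{ij})/q_i(θ_{ij}), and assume that for each i the functions θ ↦ 1_{C_i}(θ) p(θ) and θ ↦ h(θ) 1_{C_i}(θ) p(θ) are Lebesgue integrable and that ∑_{i=1}^n ∫_{C_i} p(θ) dθ > 0. Then almost surely (∑_{i=1}^n ∑_{j=1}^m h(θ_{ij}) w_{ij}) / (∑_{i=1}^n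 ∑_{j=1}^m w_{ij}) → (∑_{i=1}^n ∫_{C_i} h(θ) p(θ) dθ) / (∑_{i=1}^n ∫_{C_i} p(θ) dθ) as m → ∞. -/
open MeasureTheory Filter ProbabilityTheory

/-!
On each region, importance weighting turns an integral against the proposal law into an integral
of the unnormalised target, so the strong law of large numbers identifies the limits of the
averages of the weights and of the weighted integrand. Summing over the finitely many regions and
taking the quotient, the factors `1 / m` cancel.
-/

open scoped Topology

/-- The weight `1_C p / q` of a sample from the proposal density `q`, when the target has
unnormalised density `p` on the region `C`. -/
noncomputable def importanceWeight {X : Type*} (C : Set X) (p q : X → ℝ) : X → ℝ :=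
  C.indicator fun x ↦ p x / q x

theorem smul_importanceWeight_smul {X F : Type*} [AddCommMonoid F] [Module ℝ F] {C : Set X}
    {p q : X → ℝ} (hpq : ∀ x ∈ C, q x = 0 → p x = 0) (h : X → F) (x : X) :
    q x • importanceWeight C p q x • h x = C.indicator (fun x ↦ p x • h x) x := by
  by_cases hx : x ∈ C
  · simp only [importanceWeight, Set.indicator_of_mem hx, smul_smul,
      mul_div_cancel_of_imp' (hpq x hx)]
  · simp only [importanceWeight, Set.indicator_of_notMem hx, zero_smul, smul_zero]

section

variable {X F : Type*} [MeasurableSpace X] [NormedAddCommGroup F] [NormedSpace ℝ F]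
  {μ : Measure X} {C : Set X} {p q : X → ℝ}

theorem integrable_indicator_one_smul_iff {f : X → F} (hC : MeasurableSet C) :
    Integrable (fun x ↦ C.indicator (fun _ ↦ (1 : ℝ)) x • f x) μ ↔ IntegrableOn f C μ := by
  simp only [← Set.indicator_smul_apply_left, one_smul]
  exact integrable_indicator_iff hC

theorem integrable_importanceWeight_smul_withDensity_iff (hC : MeasurableSet C)
    (hq : AEMeasurable q μ) (hq0 : ∀ x, 0 ≤ q x) (hpq : ∀ x ∈ C, q x = 0 → p x = 0)
    {h : X → F} :
    Integrable (fun x ↦ importanceWeight C p q x • h x)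
        (μ.withDensity fun x ↦ ENNReal.ofReal (q x)) ↔
      IntegrableOn (fun x ↦ p x • h x) C μ := by
  rw [integrable_withDensity_iff_integrable_smul₀' hq.ennreal_ofReal
    (ae_of_all _ fun _ ↦ ENNReal.ofReal_lt_top), ← integrable_indicator_iff hC]
  simp only [ENNReal.toReal_ofReal (hq0 _), smul_importanceWeight_smul hpq]

theorem integral_importanceWeight_smul_withDensity (hC : MeasurableSet C)
    (hq : AEMeasurable q μ) (hq0 : ∀ x, 0 ≤ q x) (hpq : ∀ x ∈ C, q x = 0 → p x = 0)
    (h : X → F) :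
    ∫ x, importanceWeight C p q x • h x ∂μ.withDensity (fun x ↦ ENNReal.ofReal (q x)) =
      ∫ x in C, p x • h x ∂μ := by
  rw [integral_withDensity_eq_integral_toReal_smul₀ hq.ennreal_ofReal
    (ae_of_all _ fun _ ↦ ENNReal.ofReal_lt_top), ← integral_indicator hC]
  simp only [ENNReal.toReal_ofReal (hq0 _), smul_importanceWeight_smul hpq]

end

theorem tendsto_inv_smul_of_tendsto_rescaled {ι 𝕜 F : Type*} [NormedField 𝕜] [AddCommMonoid F]
    [TopologicalSpace F] [Module 𝕜 F] [ContinuousSMul 𝕜 F] {l : Filter ι} {c D : ι → 𝕜}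
    {N : ι → F} {a : F} {b : 𝕜} (hc : ∀ᶠ t in l, c t ≠ 0)
    (hN : Tendsto (fun t ↦ c t • N t) l (𝓝 a)) (hD : Tendsto (fun t ↦ c t • D t) l (𝓝 b))
    (hb : b ≠ 0) :
    Tendsto (fun t ↦ (D t)⁻¹ • N t) l (𝓝 (b⁻¹ • a)) := by
  refine ((hD.inv₀ hb).smul hN).congr' ?_
  filter_upwards [hc] with t hct
  rw [smul_eq_mul, mul_inv_rev, smul_smul, inv_mul_cancel_right₀ hct]

section

variable {Ω X F : Type*} [MeasurableSpace Ω] [MeasurableSpace X] [NormedAddCommGroup F]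
  [NormedSpace ℝ F] [CompleteSpace F] {P : Measure Ω}

theorem strong_law_ae_comp_of_hasLaw {ν : Measure X} {θ : ℕ → Ω → X}
    (hlaw : ∀ j, HasLaw (θ j) ν P) (hindep : Pairwise fun j k ↦ IndepFun (θ j) (θ k) P)
    {f : X → F} (hf : Integrable f ν) :
    ∀ᵐ ω ∂P, Tendsto (fun m : ℕ ↦ (m : ℝ)⁻¹ • ∑ j ∈ Finset.range m, f (θ j ω)) atTop
      (𝓝 (∫ x, f x ∂ν)) := by
  borelize F
  have hf_map (j : ℕ) : Integrable f (P.map (θ j)) := (hlaw j).map_eq ▸ hf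
  have hf_meas (j : ℕ) : AEMeasurable f (P.map (θ j)) := (hf_map j).aemeasurable
  rw [← (hlaw 0).integral_comp hf.aestronglyMeasurable]
  exact strong_law_ae (fun j ↦ f ∘ θ j) ((hf_map 0).comp_aemeasurable (hlaw 0).aemeasurable)
    (fun j k hjk ↦ (hindep hjk).comp₀ (hlaw j).aemeasurable (hlaw k).aemeasurable
      (hf_meas j) (hf_meas k))
    (fun j ↦ ((hlaw j).identDistrib (hlaw 0)).comp_of_aemeasurable (hf_meas j))

variable {ι : Type*} [Fintype ι] {μ : Measure X} {C : ι → Set X} {p : X → ℝ} {q : ι → X → ℝ}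
  {θ : ι → ℕ → Ω → X}

theorem ae_tendsto_sum_importanceWeight_smul (hC : ∀ i, MeasurableSet (C i))
    (hq : ∀ i, AEMeasurable (q i) μ) (hq0 : ∀ i x, 0 ≤ q i x)
    (hpq : ∀ i, ∀ x ∈ C i, q i x = 0 → p x = 0)
    (hlaw : ∀ i j, HasLaw (θ i j) (μ.withDensity fun x ↦ ENNReal.ofReal (q i x)) P)
    (hindep : ∀ i, Pairwise fun j k ↦ IndepFun (θ i j) (θ i k) P)
    {h : X → F} (hph : ∀ i, IntegrableOn (fun x ↦ p x • h x) (C i) μ) :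
    ∀ᵐ ω ∂P, Tendsto
      (fun m : ℕ ↦ (m : ℝ)⁻¹ • ∑ i, ∑ j ∈ Finset.range m,
        importanceWeight (C i) p (q i) (θ i j ω) • h (θ i j ω))
      atTop (𝓝 (∑ i, ∫ x in C i, p x • h x ∂μ)) := by
  have region_average (i : ι) := strong_law_ae_comp_of_hasLaw (hlaw i) (hindep i)
    ((integrable_importanceWeight_smul_withDensity_iff (hC i) (hq i) (hq0 i) (hpq i)).2 (hph i))
  filter_upwards [ae_all_iff.2 region_average] with ω hω
  simp only [Finset.smul_sum (s := Finset.univ),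
    ← integral_importanceWeight_smul_withDensity (hC _) (hq _) (hq0 _) (hpq _)]
  exact tendsto_finsetSum _ fun i _ ↦ hω i

theorem romc_estimator_consistency_general (hC : ∀ i, MeasurableSet (C i))
    (hq : ∀ i, AEMeasurable (q i) μ) (hq0 : ∀ i x, 0 ≤ q i x)
    (hpq : ∀ i, ∀ x ∈ C i, q i x = 0 → p x = 0)
    (hlaw : ∀ i j, HasLaw (θ i j) (μ.withDensity fun x ↦ ENNReal.ofReal (q i x)) P)
    (hindep : ∀ i, Pairwise fun j k ↦ IndepFun (θ i j) (θ i k) P)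
    (hp : ∀ i, IntegrableOn p (C i) μ)
    {h : X → F} (hph : ∀ i, IntegrableOn (fun x ↦ p x • h x) (C i) μ)
    (hden : ∑ i, ∫ x in C i, p x ∂μ ≠ 0) :
    ∀ᵐ ω ∂P, Tendsto
      (fun m : ℕ ↦
        (∑ i, ∑ j ∈ Finset.range m, importanceWeight (C i) p (q i) (θ i j ω))⁻¹ •
          ∑ i, ∑ j ∈ Finset.range m,
            importanceWeight (C i) p (q i) (θ i j ω) • h (θ i j ω))
      atTop
      (𝓝 ((∑ i, ∫ x in C i, p x ∂μ)⁻¹ • ∑ i, ∫ x in C i, p x • h x ∂μ)) := by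
  have weight_average := ae_tendsto_sum_importanceWeight_smul hC hq hq0 hpq hlaw hindep
    (h := fun _ ↦ (1 : ℝ)) (by simpa only [smul_eq_mul, mul_one] using hp)
  simp only [smul_eq_mul (b := (1 : ℝ)), mul_one] at weight_average
  filter_upwards [weight_average,
    ae_tendsto_sum_importanceWeight_smul hC hq hq0 hpq hlaw hindep hph] with ω hD hN
  have eventually_inv_ne_zero : ∀ᶠ m : ℕ in atTop, (m : ℝ)⁻¹ ≠ 0 := by
    filter_upwards [eventually_ne_atTop 0] with m hm
    exact inv_ne_zero (Nat.cast_ne_zero.2 hm)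
  exact tendsto_inv_smul_of_tendsto_rescaled eventually_inv_ne_zero hN hD hden

end

/-- Consistency of the Robust OMC estimator (Equations (9)–(12) of the paper): the
self-normalized importance-sampling estimator built from `n` acceptance regions `C_i`
and proposal densities `q_i` positive on them converges almost surely, as the number `m`
of proposal samples per region grows, to the approximate posterior expectation. -/
theorem romc_estimator_consistency {Ω : Type*} [MeasurableSpace Ω] (P : Measure Ω)
    [IsProbabilityMeasure P] (d n : ℕ) (hn : 1 ≤ n)
    (C : Fin n → Set (Fin d → ℝ)) (hCmeas : ∀ i, MeasurableSet (C i))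
    (q : Fin n → (Fin d → ℝ) → ℝ) (hq : ∀ i, Measurable (q i)) (hq0 : ∀ i x, 0 ≤ q i x)
    (hqC : ∀ i, ∀ x ∈ C i, 0 < q i x)
    (θs : Fin n × ℕ → Ω → (Fin d → ℝ))
    (hmeas : ∀ ij, Measurable (θs ij))
    (hlaw : ∀ i j, Measure.map (θs (i, j)) P =
      (volume : Measure (Fin d → ℝ)).withDensity fun x => ENNReal.ofReal (q i x))
    (hindep : iIndepFun θs P)
    (p : (Fin d → ℝ) → ℝ) (hp : Measurable p) (hp0 : ∀ x, 0 ≤ p x)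
    (h : (Fin d → ℝ) → ℝ) (hh : Measurable h)
    (hint₁ : ∀ i, Integrable (fun x => (C i).indicator (fun _ => (1 : ℝ)) x * p x)
      (volume : Measure (Fin d → ℝ)))
    (hint₂ : ∀ i, Integrable (fun x => h x * ((C i).indicator (fun _ => (1 : ℝ)) x * p x))
      (volume : Measure (Fin d → ℝ)))
    (hden : 0 < ∑ i, ∫ θ in C i, p θ) :
    ∀ᵐ ω ∂P, Tendsto
      (fun m : ℕ =>
        (∑ i, ∑ j ∈ Finset.range m,
            h (θs (i, j) ω) * (C i).indicator (fun y => p y / q i y) (θs (i, j) ω)) /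
        (∑ i, ∑ j ∈ Finset.range m,
            (C i).indicator (fun y => p y / q i y) (θs (i, j) ω)))
      atTop
      (nhds ((∑ i, ∫ θ in C i, h θ * p θ) / (∑ i, ∫ θ in C i, p θ))) := by
  have hp_int (i : Fin n) : IntegrableOn p (C i) :=
    (integrable_indicator_one_smul_iff (hCmeas i)).1 (hint₁ i)
  have hph_int (i : Fin n) : IntegrableOn (fun x ↦ p x • h x) (C i) := by
    rw [← integrable_indicator_one_smul_iff (hCmeas i)]
    simpa only [smul_eq_mul, mul_comm, mul_left_comm, mul_assoc] using hint₂ i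
  simpa only [importanceWeight, smul_eq_mul, mul_comm, inv_mul_eq_div] using
    romc_estimator_consistency_general (θ := fun i j ↦ θs (i, j)) hCmeas
      (fun i ↦ (hq i).aemeasurable) hq0 (fun i x hx hqx ↦ absurd hqx (hqC i x hx).ne')
      (fun i j ↦ ⟨(hmeas _).aemeasurable, hlaw i j⟩)
      (fun i j k hjk ↦ hindep.indepFun (by simpa using hjk)) hp_int hph_int hden.ne'
end

section
/- Let n ≥ 1 and for each i = 1, ..., n let B_i ⊆ ℝ^d be a bounded measurable set with 0 < vol(B_i) < ∞ (a bounding box), let C_i ⊆ B_i be measurable (the acceptance region), and let (θ_{ij})_{j≥1} be i.i.d. random variables uniformly distributed on B_i, with all the sequences jointly independent. Let p : ℝ^d → ℝ be a nonnegative measurable density, bounded on each B_i, and let h : ℝ^d → ℝ be measurable and bounded on each B_i. Define the weights w_{ij} = 1_{C_i}(θ_{ij}) · p(θ_{ij}) · vol(B_i), and assume ∑_{i=1}^n ∫_{C_i} p(θ) dθ > 0. Then almost surely (∑_{i=1}^n ∑_{j=1}^m h(θ_{ij}) w_{ij}) / (∑_{i=1}^n ∑_{j=1}^m w_{ij}) →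 (∑_{i=1}^n ∫_{C_i} h(θ) p(θ) dθ) / (∑_{i=1}^n ∫_{C_i} p(θ) dθ) as m → ∞. -/
open MeasureTheory Filter ProbabilityTheory

/-!
A function `f` on `C ⊆ B` satisfies `∫_C f = vol(B) · 𝔼[1_C(θ) f(θ)]` for `θ` uniform on `B`: this
is what the factor `vol(B)` in the weights is for. The strong law of large numbers, applied on each
box to `f = p` and to `f = p • h`, therefore makes the average weight and the average weighted value
converge to the wanted integrals. Finite sums over the boxes preserve this, and in the
self-normalized ratio the factors `1 / m` cancel.
-/

open Topology

section SelfNormalization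

variable {α 𝕜 E : Type*} [GroupWithZero 𝕜] [TopologicalSpace 𝕜] [ContinuousInv₀ 𝕜]
  [MulAction 𝕜 E] [TopologicalSpace E] [ContinuousSMul 𝕜 E]

theorem tendsto_inv_smul_of_tendsto_smul {l : Filter α} {c w : α → 𝕜} {v : α → E} {a : 𝕜} {b : E}
    (hc : ∀ᶠ x in l, c x ≠ 0) (hw : Tendsto (fun x => c x • w x) l (𝓝 a))
    (hv : Tendsto (fun x => c x • v x) l (𝓝 b)) (ha : a ≠ 0) :
    Tendsto (fun x => (w x)⁻¹ • v x) l (𝓝 (a⁻¹ • b)) := by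
  refine ((hw.inv₀ ha).smul hv).congr' ?_
  filter_upwards [hc] with x hx
  rw [smul_eq_mul, mul_inv_rev, smul_smul, inv_mul_cancel_right₀ hx]

end SelfNormalization

section ImportanceSampling

variable {Ω E F : Type*} [MeasurableSpace Ω] [MeasurableSpace E] [NormedAddCommGroup F]
  {P : Measure Ω} {μ : Measure E}

theorem integrable_indicator_cond {B C : Set E} {f : E → F} (hC : MeasurableSet C)
    (hB0 : μ B ≠ 0) (hf : IntegrableOn f C μ) : Integrable (C.indicator f) (μ[|B]) :=
  ((integrable_indicator_iff hC).2 hf).restrict.smul_measure (ENNReal.inv_ne_top.2 hB0)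

variable [NormedSpace ℝ F]

theorem integral_indicator_cond {B C : Set E} {f : E → F} (hC : MeasurableSet C) (hCB : C ⊆ B) :
    ∫ x, C.indicator f x ∂μ[|B] = (μ.real B)⁻¹ • ∫ x in C, f x ∂μ := by
  rw [ProbabilityTheory.cond, integral_smul_measure, ENNReal.toReal_inv, integral_indicator hC,
    Measure.restrict_restrict hC, Set.inter_eq_left.2 hCB, measureReal_def]

theorem ae_tendsto_average_comp_of_hasLaw [CompleteSpace F] {ν : Measure E} {X : ℕ → Ω → E}
    {f : E → F} (hX : ∀ j, HasLaw (X j) ν P) (hindep : Pairwise fun j k => X j ⟂ᵢ[P] X k)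
    (hf : Integrable f ν) :
    ∀ᵐ ω ∂P, Tendsto (fun m : ℕ => (m : ℝ)⁻¹ • ∑ j ∈ Finset.range m, f (X j ω)) atTop
      (𝓝 (∫ x, f x ∂ν)) := by
  borelize F
  have hf_map (j : ℕ) : Integrable f (P.map (X j)) := (hX j).map_eq ▸ hf
  have hf_meas (j : ℕ) : AEMeasurable f (P.map (X j)) := (hf_map j).aemeasurable
  rw [← (hX 0).integral_comp hf.aestronglyMeasurable]
  exact strong_law_ae (fun j => f ∘ X j) ((hf_map 0).comp_aemeasurable (hX 0).aemeasurable)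
    (fun j k hjk => (hindep hjk).comp₀ (hX j).aemeasurable (hX k).aemeasurable
      (hf_meas j) (hf_meas k))
    fun j => ((hX j).identDistrib (hX 0)).comp_of_aemeasurable (hf_meas j)

/-- The importance weight `1_C(x) · p(x) · μ(B)` of a sample `x` proposed uniformly from `B`, for
the target density `p` restricted to the acceptance region `C`. The factor `μ(B)` is taken as a real
number, so it is `0` when `μ B = ∞`. -/
noncomputable def boxWeight (μ : Measure E) (B C : Set E) (p : E → ℝ) (x : E) : ℝ :=
  C.indicator (fun _ => 1) x * p x * μ.real B

section BoxWeight

variable {B C : Set E} {p : E → ℝ} {h : E → F}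

theorem boxWeight_smul (x : E) :
    boxWeight μ B C p x • h x = μ.real B • C.indicator (fun y => p y • h y) x := by
  by_cases hx : x ∈ C <;> simp [boxWeight, hx, smul_smul, mul_comm]

theorem integrable_boxWeight_smul_cond (hC : MeasurableSet C) (hB0 : μ B ≠ 0)
    (hph : IntegrableOn (fun x => p x • h x) C μ) :
    Integrable (fun x => boxWeight μ B C p x • h x) (μ[|B]) := by
  simp only [boxWeight_smul]
  exact (integrable_indicator_cond hC hB0 hph).smul _

theorem integral_boxWeight_smul_cond (hC : MeasurableSet C) (hCB : C ⊆ B) (hB0 : μ B ≠ 0)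
    (hBtop : μ B ≠ ⊤) :
    ∫ x, boxWeight μ B C p x • h x ∂μ[|B] = ∫ x in C, p x • h x ∂μ := by
  have hB : μ.real B ≠ 0 := ENNReal.toReal_ne_zero.2 ⟨hB0, hBtop⟩
  simp only [boxWeight_smul]
  rw [integral_smul, integral_indicator_cond hC hCB, smul_inv_smul₀ hB]

end BoxWeight

section Estimator

variable {ι : Type*} [Fintype ι] [CompleteSpace F] {B C : ι → Set E} {θ : ι → ℕ → Ω → E}
  {p : E → ℝ} {h : E → F}

theorem ae_tendsto_average_sum_boxWeight_smul
    (hB0 : ∀ i, μ (B i) ≠ 0) (hBtop : ∀ i, μ (B i) ≠ ⊤)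
    (hC : ∀ i, MeasurableSet (C i)) (hCB : ∀ i, C i ⊆ B i)
    (hθ : ∀ i j, HasLaw (θ i j) (μ[|B i]) P)
    (hindep : ∀ i, Pairwise fun j k => θ i j ⟂ᵢ[P] θ i k)
    (hph : ∀ i, IntegrableOn (fun x => p x • h x) (C i) μ) :
    ∀ᵐ ω ∂P, Tendsto
      (fun m : ℕ => (m : ℝ)⁻¹ • ∑ i, ∑ j ∈ Finset.range m,
        boxWeight μ (B i) (C i) p (θ i j ω) • h (θ i j ω))
      atTop (𝓝 (∑ i, ∫ x in C i, p x • h x ∂μ)) := by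
  have hbox (i : ι) := ae_tendsto_average_comp_of_hasLaw (hθ i) (hindep i)
    (integrable_boxWeight_smul_cond (hC i) (hB0 i) (hph i))
  filter_upwards [ae_all_iff.2 hbox] with ω hω
  simp only [integral_boxWeight_smul_cond (hC _) (hCB _) (hB0 _) (hBtop _)] at hω
  simpa only [Finset.smul_sum] using tendsto_finsetSum Finset.univ fun i _ => hω i

theorem romc_box_weights_consistency_general
    (hB0 : ∀ i, μ (B i) ≠ 0) (hBtop : ∀ i, μ (B i) ≠ ⊤)
    (hC : ∀ i, MeasurableSet (C i)) (hCB : ∀ i, C i ⊆ B i)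
    (hθ : ∀ i j, HasLaw (θ i j) (μ[|B i]) P)
    (hindep : ∀ i, Pairwise fun j k => θ i j ⟂ᵢ[P] θ i k)
    (hp : ∀ i, IntegrableOn p (C i) μ)
    (hph : ∀ i, IntegrableOn (fun x => p x • h x) (C i) μ)
    (hden : ∑ i, ∫ x in C i, p x ∂μ ≠ 0) :
    ∀ᵐ ω ∂P, Tendsto
      (fun m : ℕ =>
        (∑ i, ∑ j ∈ Finset.range m, boxWeight μ (B i) (C i) p (θ i j ω))⁻¹ •
          ∑ i, ∑ j ∈ Finset.range m, boxWeight μ (B i) (C i) p (θ i j ω) • h (θ i j ω))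
      atTop
      (𝓝 ((∑ i, ∫ x in C i, p x ∂μ)⁻¹ • ∑ i, ∫ x in C i, p x • h x ∂μ)) := by
  have hweights := ae_tendsto_average_sum_boxWeight_smul (h := fun _ => (1 : ℝ)) hB0 hBtop hC hCB
    hθ hindep (by simpa only [smul_eq_mul, mul_one] using hp)
  have hvalues := ae_tendsto_average_sum_boxWeight_smul hB0 hBtop hC hCB hθ hindep hph
  have hm : ∀ᶠ m : ℕ in atTop, (m : ℝ)⁻¹ ≠ 0 := by
    filter_upwards [eventually_ne_atTop 0] with m hm using inv_ne_zero (Nat.cast_ne_zero.2 hm)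
  filter_upwards [hweights, hvalues] with ω hwω hvω
  simp only [smul_eq_mul (_ : ℝ) (1 : ℝ), mul_one] at hwω
  exact tendsto_inv_smul_of_tendsto_smul hm hwω hvω hden

end Estimator

end ImportanceSampling

/-- Correctness of the weight formula `w_ij = 1_{C_i}(θ_ij) · p(θ_ij) · vol(B_i)` used in
Algorithms 2 and 3 of the paper: with proposals uniform on bounding boxes `B_i ⊇ C_i`,
the self-normalized weighted estimator converges almost surely to the approximate
posterior expectation. -/
theorem romc_box_weights_consistency {Ω : Type*} [MeasurableSpace Ω] (P : Measure Ω)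
    [IsProbabilityMeasure P] (d n : ℕ) (hn : 1 ≤ n)
    (B : Fin n → Set (Fin d → ℝ)) (hBmeas : ∀ i, MeasurableSet (B i))
    (hBbdd : ∀ i, Bornology.IsBounded (B i))
    (hBpos : ∀ i, 0 < volume (B i)) (hBfin : ∀ i, volume (B i) < ⊤)
    (C : Fin n → Set (Fin d → ℝ)) (hCmeas : ∀ i, MeasurableSet (C i))
    (hCB : ∀ i, C i ⊆ B i)
    (θs : Fin n × ℕ → Ω → (Fin d → ℝ))
    (hmeas : ∀ ij, Measurable (θs ij))
    (hlaw : ∀ i j, Measure.map (θs (i, j)) P =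
      (volume (B i))⁻¹ • (volume : Measure (Fin d → ℝ)).restrict (B i))
    (hindep : iIndepFun θs P)
    (p : (Fin d → ℝ) → ℝ) (hp : Measurable p) (hp0 : ∀ x, 0 ≤ p x)
    (hpbdd : ∀ i, ∃ K : ℝ, ∀ x ∈ B i, p x ≤ K)
    (h : (Fin d → ℝ) → ℝ) (hh : Measurable h)
    (hhbdd : ∀ i, ∃ K : ℝ, ∀ x ∈ B i, |h x| ≤ K)
    (hden : 0 < ∑ i, ∫ θ in C i, p θ) :
    ∀ᵐ ω ∂P, Tendsto
      (fun m : ℕ =>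
        (∑ i, ∑ j ∈ Finset.range m,
            h (θs (i, j) ω) *
              ((C i).indicator (fun _ => (1 : ℝ)) (θs (i, j) ω) * p (θs (i, j) ω) *
                (volume (B i)).toReal)) /
        (∑ i, ∑ j ∈ Finset.range m,
            (C i).indicator (fun _ => (1 : ℝ)) (θs (i, j) ω) * p (θs (i, j) ω) *
              (volume (B i)).toReal))
      atTop
      (nhds ((∑ i, ∫ θ in C i, h θ * p θ) / (∑ i, ∫ θ in C i, p θ))) := by
  have hp_int (i : Fin n) : IntegrableOn p (C i) := by
    obtain ⟨K, hK⟩ := hpbdd i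
    exact .of_bound ((measure_mono (hCB i)).trans_lt (hBfin i)) hp.aestronglyMeasurable K <|
      ae_restrict_of_forall_mem (hCmeas i) fun x hx =>
        (Real.norm_of_nonneg (hp0 x)).trans_le (hK x (hCB i hx))
  have hph_int (i : Fin n) : IntegrableOn (fun x => p x • h x) (C i) := by
    obtain ⟨K, hK⟩ := hhbdd i
    exact (hp_int i).mul_bdd hh.aestronglyMeasurable <|
      ae_restrict_of_forall_mem (hCmeas i) fun x hx => hK x (hCB i hx)
  have hlaw_cond (i : Fin n) (j : ℕ) : HasLaw (θs (i, j)) (volume[|B i]) P :=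
    ⟨(hmeas (i, j)).aemeasurable, hlaw i j⟩
  have hindep_row (i : Fin n) : Pairwise fun j k => θs (i, j) ⟂ᵢ[P] θs (i, k) :=
    fun j k hjk => hindep.indepFun fun heq => hjk (congrArg Prod.snd heq)
  simpa only [boxWeight, measureReal_def, smul_eq_mul, ← div_eq_inv_mul, mul_comm (h _)] using
    romc_box_weights_consistency_general (fun i => (hBpos i).ne') (fun i => (hBfin i).ne)
      hCmeas hCB hlaw_cond hindep_row hp_int hph_int hden.ne'
end
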